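/- Let G be a finite weighted graph, let H be a subgraph of G, and let e be an edge of H with endpoints x and y. Then for every β ≥ 0, βJ_e (⟨σ_x σ_y⟩_{G,β,0} − ⟨σ_x σ_y⟩_{H,β,0}) = (C_{H,β} ⊗ C_{G,β})(ℬ_e), where ℬ_e is the set of pairs of currents (n₁, n₂) ∈ Ω_H × Ω_G such that n₁(e) = 0, n₂(e) = 1, and x and y are connected by an (n₁+n₂)-open path in G ∖ {e} but not in H ∖ {e}. -/

import Mathlib

open MeasureTheory Filter Topology

noncomputable section

namespace IsingPaper

/-- A finite weighted graph: a finite vertex set together with symmetric non-negative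
coupling constants (`J u v > 0` meaning that `{u,v}` is an edge). -/
structure FinWeightedGraph : Type 1 where
  V : Type
  fintypeV : Fintype V
  J : V → V → ℝ
  J_symm : ∀ u v, J u v = J v u
  J_nonneg : ∀ u v, 0 ≤ J u v
  J_irrefl : ∀ v, J v v = 0

namespace FinWeightedGraph

variable (G : FinWeightedGraph)

instance : Fintype G.V := G.fintypeV

/-- The coupling constants as a function on unordered pairs. -/
def J2 : Sym2 G.V → ℝ := Sym2.lift ⟨G.J, G.J_symm⟩

/-- The weight `w_β(n) = ∏_e (βJ_e)^{n_e} / n_e!` of a current `n`.  (A current taking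
a positive value on a non-edge gets weight zero, so currents may be indexed by all
unordered pairs of vertices.) -/
def curWeight (β : ℝ) (n : Sym2 G.V → ℕ) : ℝ := by
  classical exact ∏ e : Sym2 G.V, (β * G.J2 e) ^ (n e) / (Nat.factorial (n e))

/-- The total current at the vertex `v`. -/
def degSum (v : G.V) (n : Sym2 G.V → ℕ) : ℕ := by
  classical exact ∑ e : Sym2 G.V, if v ∈ e then n e else 0

/-- The set `∂n` of sources of a current. -/
def sources (n : Sym2 G.V → ℕ) : Set G.V := {v | Odd (G.degSum v n)}

/-- The current `n` lives on the subgraph with edge set `S`. -/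
def supportedOn (S : Set (Sym2 G.V)) (n : Sym2 G.V → ℕ) : Prop :=
  ∀ e, n e ≠ 0 → e ∈ S

/-- The partition function `∑_{n : ∂n = ∅} w_β(n)` of sourceless currents on the
subgraph with edge set `S`. -/
def curZ (S : Set (Sym2 G.V)) (β : ℝ) : ℝ := by
  classical exact ∑' n : Sym2 G.V → ℕ,
    if G.sources n = ∅ ∧ G.supportedOn S n then G.curWeight β n else 0

/-- The Ising two-point function `⟨σ_x σ_y⟩` on the subgraph with edge set `S`,
expressed via the random current representation. -/
def twoPoint (S : Set (Sym2 G.V)) (β : ℝ) (x y : G.V) : ℝ := by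
  classical exact
  (∑' n : Sym2 G.V → ℕ,
    if G.sources n = {x, y} ∧ G.supportedOn S n then G.curWeight β n else 0) / G.curZ S β

/-- `x` and `y` are joined by an `m`-open path avoiding the edge `e` inside the
subgraph with edge set `S`. -/
def conn (S : Set (Sym2 G.V)) (e : Sym2 G.V) (m : Sym2 G.V → ℕ) (x y : G.V) : Prop :=
  Relation.ReflTransGen (fun a b => s(a, b) ≠ e ∧ s(a, b) ∈ S ∧ 1 ≤ m s(a, b)) x y

open Classical in
theorem curWeight_eq (β : ℝ) (n : Sym2 G.V → ℕ) :
    G.curWeight β n = ∏ e, (β * G.J2 e) ^ (n e) / (Nat.factorial (n e)) := by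
  unfold curWeight
  congr!

open Classical in
theorem degSum_eq (v : G.V) (n : Sym2 G.V → ℕ) :
    G.degSum v n = ∑ e, if v ∈ e then n e else 0 := by
  unfold degSum
  congr!

open Classical in
theorem curZ_eq (S : Set (Sym2 G.V)) (β : ℝ) :
    G.curZ S β = ∑' n : Sym2 G.V → ℕ,
      if G.sources n = ∅ ∧ G.supportedOn S n then G.curWeight β n else 0 := by
  unfold curZ
  congr!

open Classical in
theorem twoPoint_eq (S : Set (Sym2 G.V)) (β : ℝ) (x y : G.V) :
    G.twoPoint S β x y = (∑' n : Sym2 G.V → ℕ,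
      if G.sources n = {x, y} ∧ G.supportedOn S n then G.curWeight β n else 0) /
        G.curZ S β := by
  unfold twoPoint
  congr!

theorem J2_nonneg (e : Sym2 G.V) : 0 ≤ G.J2 e := by
  induction e with
  | _ a b => exact G.J_nonneg a b

theorem J2_diag (v : G.V) : G.J2 s(v, v) = 0 := G.J_irrefl v

theorem curWeight_nonneg {β : ℝ} (hβ : 0 ≤ β) (n : Sym2 G.V → ℕ) : 0 ≤ G.curWeight β n := by
  rw [curWeight_eq]
  exact Finset.prod_nonneg fun e _ =>
    div_nonneg (pow_nonneg (mul_nonneg hβ (G.J2_nonneg e)) _) (Nat.cast_nonneg _)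

theorem curWeight_zero (β : ℝ) : G.curWeight β 0 = 1 := by
  simp [curWeight_eq]

/-- A current of non-zero weight vanishes on loops. -/
theorem apply_diag_of_curWeight_ne_zero {β : ℝ} {n : Sym2 G.V → ℕ}
    (h : G.curWeight β n ≠ 0) (v : G.V) : n s(v, v) = 0 := by
  classical
  rw [curWeight_eq, Finset.prod_ne_zero_iff] at h
  by_contra hn
  exact h s(v, v) (Finset.mem_univ _) (by simp [J2_diag, hn])

theorem summable_curWeight {β : ℝ} (hβ : 0 ≤ β) : Summable (G.curWeight β) := by
  classical
  refine summable_of_sum_le (G.curWeight_nonneg hβ)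
    (c := ∏ e : Sym2 G.V, Real.exp (β * G.J2 e)) fun u => ?_
  calc ∑ n ∈ u, G.curWeight β n
      ≤ ∑ n ∈ Fintype.piFinset fun e => u.image (fun n => n e), G.curWeight β n := by
        refine Finset.sum_le_sum_of_subset_of_nonneg (fun n hn => ?_)
          fun n _ _ => G.curWeight_nonneg hβ n
        exact Fintype.mem_piFinset.2 fun e => Finset.mem_image_of_mem (fun n => n e) hn
    _ = ∏ e, ∑ k ∈ u.image (fun n => n e), (β * G.J2 e) ^ k / (Nat.factorial k) := by
        rw [Finset.prod_univ_sum]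
        exact Finset.sum_congr rfl fun n _ => G.curWeight_eq β n
    _ ≤ ∏ e : Sym2 G.V, Real.exp (β * G.J2 e) := by
        have h0 : ∀ (e : Sym2 G.V) (k : ℕ), 0 ≤ (β * G.J2 e) ^ k / (Nat.factorial k : ℝ) :=
          fun e k => div_nonneg (pow_nonneg (mul_nonneg hβ (G.J2_nonneg e)) _)
            (Nat.cast_nonneg _)
        refine Finset.prod_le_prod (fun e _ => Finset.sum_nonneg fun k _ => h0 e k)
          fun e _ => ?_
        rw [Real.exp_eq_exp_ℝ, NormedSpace.exp_eq_tsum_div]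
        exact (Real.summable_pow_div_factorial _).sum_le_tsum _ fun k _ => h0 e k

theorem summable_curWeight_ite {β : ℝ} (hβ : 0 ≤ β) (p : (Sym2 G.V → ℕ) → Prop)
    [DecidablePred p] :
    Summable fun n => if p n then G.curWeight β n else 0 := by
  refine Summable.of_nonneg_of_le (fun n => ?_) (fun n => ?_) (G.summable_curWeight hβ)
  all_goals split_ifs <;> simp [G.curWeight_nonneg hβ]

theorem summable_curWeight_mul_ite {β : ℝ} (hβ : 0 ≤ β)
    (p : (Sym2 G.V → ℕ) × (Sym2 G.V → ℕ) → Prop) [DecidablePred p] :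
    Summable fun nn => if p nn then G.curWeight β nn.1 * G.curWeight β nn.2 else 0 := by
  have h := (G.summable_curWeight hβ).mul_of_nonneg (G.summable_curWeight hβ)
    (G.curWeight_nonneg hβ) (G.curWeight_nonneg hβ)
  have h0 := fun nn : (Sym2 G.V → ℕ) × (Sym2 G.V → ℕ) =>
    mul_nonneg (G.curWeight_nonneg hβ nn.1) (G.curWeight_nonneg hβ nn.2)
  refine Summable.of_nonneg_of_le (fun nn => ?_) (fun nn => ?_) h
  all_goals split_ifs <;> simp [h0]

theorem sources_zero : G.sources 0 = ∅ := by
  ext v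
  simp [sources, degSum_eq]

theorem curZ_pos (S : Set (Sym2 G.V)) {β : ℝ} (hβ : 0 ≤ β) : 0 < G.curZ S β := by
  classical
  rw [curZ_eq]
  refine (G.summable_curWeight_ite hβ _).tsum_pos (fun n => ?_) 0 ?_
  · split_ifs <;> simp [G.curWeight_nonneg hβ]
  · simp [sources_zero, supportedOn, curWeight_zero]

theorem degSum_add (v : G.V) (m n : Sym2 G.V → ℕ) :
    G.degSum v (m + n) = G.degSum v m + G.degSum v n := by
  classical
  simp only [degSum_eq, ← Finset.sum_add_distrib]
  refine Finset.sum_congr rfl fun e _ => ?_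
  split_ifs <;> simp

theorem sources_add (m n : Sym2 G.V → ℕ) :
    G.sources (m + n) = symmDiff (G.sources m) (G.sources n) := by
  ext v
  simp only [sources, degSum_add, Set.mem_ofPred_eq, Set.mem_symmDiff, Nat.odd_add,
    ← Nat.not_odd_iff_even]
  tauto

open Classical in
theorem sources_single (x y : G.V) :
    G.sources (Pi.single s(x, y) 1) = {x, y} := by
  ext v
  have : G.degSum v (Pi.single s(x, y) 1) = if v ∈ s(x, y) then 1 else 0 := by
    rw [degSum_eq, Finset.sum_eq_single s(x, y)]
    · simp
    · intro e _ he
      simp [he]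
    · simp
  simp only [sources, Set.mem_ofPred_eq, this, Sym2.mem_iff, Set.mem_insert_iff,
    Set.mem_singleton_iff]
  split_ifs with h <;> simp [h]

open Classical in
theorem curWeight_add_single (β : ℝ) {n : Sym2 G.V → ℕ} {e : Sym2 G.V} (hn : n e = 0) :
    G.curWeight β (n + Pi.single e 1) = β * G.J2 e * G.curWeight β n := by
  rw [curWeight_eq, curWeight_eq, ← Finset.mul_prod_erase _ _ (Finset.mem_univ e),
    ← Finset.mul_prod_erase _ (fun e => (β * G.J2 e) ^ (n e) / (Nat.factorial (n e) : ℝ))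
      (Finset.mem_univ e), ← mul_assoc]
  congr 1
  · simp [hn]
  · refine Finset.prod_congr rfl fun f hf => ?_
    simp [Finset.ne_of_mem_erase hf]

/-- The product of the spins at the endpoints of an edge. -/
def edgeSpin (σ : G.V → ℤˣ) (e : Sym2 G.V) : ℤˣ := by
  classical exact ∏ v, if v ∈ e then σ v else 1

theorem edgeSpin_mk (σ : G.V → ℤˣ) {a b : G.V} (hab : a ≠ b) :
    G.edgeSpin σ s(a, b) = σ a * σ b := by
  classical
  have : ∀ v, (if v ∈ s(a, b) then σ v else 1) =
      (if v = a then σ v else 1) * (if v = b then σ v else 1) := fun v => by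
    by_cases ha : v = a <;> by_cases hb : v = b <;> simp_all
  unfold edgeSpin
  rw [Finset.prod_congr rfl fun v _ => by convert this v, Finset.prod_mul_distrib]
  simp

theorem prod_pow_degSum (σ : G.V → ℤˣ) (n : Sym2 G.V → ℕ) :
    ∏ v, σ v ^ G.degSum v n = ∏ e, G.edgeSpin σ e ^ n e := by
  classical
  simp only [edgeSpin, degSum_eq, ← Finset.prod_pow_eq_pow_sum, ← Finset.prod_pow]
  rw [Finset.prod_comm]
  refine Finset.prod_congr rfl fun e _ => Finset.prod_congr rfl fun v _ => ?_
  split_ifs <;> simp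

open Classical in
theorem pow_degSum (σ : G.V → ℤˣ) (n : Sym2 G.V → ℕ) (v : G.V) :
    σ v ^ G.degSum v n = if v ∈ G.sources n then σ v else 1 := by
  split_ifs with h
  · obtain ⟨k, hk⟩ := h
    rw [hk, pow_succ, pow_mul, Int.units_sq, one_pow, one_mul]
  · obtain ⟨k, hk⟩ := Nat.not_odd_iff_even.1 h
    rw [hk, ← two_mul, pow_mul, Int.units_sq, one_pow]

/-- A loopless current with exactly two sources joins them by a path of positive current. -/
theorem reflTransGen_of_sources {n : Sym2 G.V → ℕ} (hn : ∀ v, n s(v, v) = 0) {x y : G.V}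
    (hxy : x ≠ y) (h : G.sources n = {x, y}) :
    Relation.ReflTransGen (fun a b => 1 ≤ n s(a, b)) x y := by
  classical
  by_contra hc
  let σ : G.V → ℤˣ := fun v =>
    if Relation.ReflTransGen (fun a b => 1 ≤ n s(a, b)) x v then -1 else 1
  have hσx : σ x = -1 := if_pos Relation.ReflTransGen.refl
  have hσy : σ y = 1 := if_neg hc
  have hedge : ∏ e, G.edgeSpin σ e ^ n e = 1 := by
    refine Finset.prod_eq_one fun e _ => ?_
    induction e with
    | _ a b =>
      by_cases h0 : n s(a, b) = 0
      · rw [h0, pow_zero]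
      · have hab : a ≠ b := fun hab => h0 (hab ▸ hn a)
        have h1 : 1 ≤ n s(a, b) := Nat.one_le_iff_ne_zero.2 h0
        have hiff : Relation.ReflTransGen (fun a b => 1 ≤ n s(a, b)) x a ↔
            Relation.ReflTransGen (fun a b => 1 ≤ n s(a, b)) x b :=
          ⟨fun h => h.tail h1, fun h => h.tail (by rwa [Sym2.eq_swap])⟩
        have hs : σ a = σ b := by simp only [σ, hiff]
        rw [edgeSpin_mk _ _ hab, hs, Int.units_mul_self, one_pow]
  have hvert : ∏ v, σ v ^ G.degSum v n = -1 := by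
    have : ∀ v, σ v ^ G.degSum v n = if v = x then -1 else 1 := fun v => by
      rw [pow_degSum, h]
      by_cases hx : v = x
      · simp [hx, hσx]
      · by_cases hy : v = y
        · simp [hy, hσy, hxy.symm]
        · simp [hx, hy]
    simp [this]
  rw [prod_pow_degSum, hedge] at hvert
  exact absurd hvert (by decide)

open Classical in
/-- Averaging over spins detects the sources of a current. -/
theorem sum_spin_eq (A : Set G.V) (n : Sym2 G.V → ℕ) :
    ∑ σ : G.V → ℤˣ, ((∏ v, if v ∈ A then (σ v : ℤ) else 1) *
      ∏ e, (G.edgeSpin σ e : ℤ) ^ n e) =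
      2 ^ Fintype.card G.V * if G.sources n = A then 1 else 0 := by
  have hterm : ∀ σ : G.V → ℤˣ, (∏ v, if v ∈ A then (σ v : ℤ) else 1) *
      ∏ e, (G.edgeSpin σ e : ℤ) ^ n e =
      ∏ v, ((if v ∈ A then (σ v : ℤ) else 1) * if v ∈ G.sources n then (σ v : ℤ) else 1) := by
    intro σ
    have h := congrArg (Units.val) (G.prod_pow_degSum σ n)
    simp only [pow_degSum, Units.coe_prod, Units.val_pow_eq_pow_val, apply_ite Units.val,
      Units.val_one] at h
    rw [← h, Finset.prod_mul_distrib]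
  simp only [hterm]
  have hswap := Finset.prod_univ_sum (fun _ : G.V => (Finset.univ : Finset ℤˣ))
    (fun v u => (if v ∈ A then (u : ℤ) else 1) * if v ∈ G.sources n then (u : ℤ) else 1)
  rw [Fintype.piFinset_univ] at hswap
  rw [← hswap]
  have hsum : ∀ v, ∑ u : ℤˣ, ((if v ∈ A then (u : ℤ) else 1) *
      if v ∈ G.sources n then (u : ℤ) else 1) =
      2 * if (v ∈ G.sources n ↔ v ∈ A) then 1 else 0 := by
    intro v
    by_cases h1 : v ∈ A <;> by_cases h2 : v ∈ G.sources n <;>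
      simp [h1, h2, UnitsInt.univ]
  simp only [hsum, Finset.prod_mul_distrib, Finset.prod_const, Finset.card_univ]
  congr 1
  rw [Finset.prod_ite_zero]
  simp [Set.ext_iff]

open Classical in
/-- The number of sub-multigraphs of `m` inside `S` with source set `A`. -/
def subCount (S : Set (Sym2 G.V)) (m : Sym2 G.V → ℕ) (A : Set G.V) : ℤ :=
  ∑ n ∈ Fintype.piFinset fun e => Finset.range (m e + 1),
    if G.sources n = A ∧ G.supportedOn S n then ∏ e, ((m e).choose (n e) : ℤ) else 0

open Classical in
theorem two_pow_mul_subCount (S : Set (Sym2 G.V)) (m : Sym2 G.V → ℕ) (A : Set G.V) :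
    2 ^ Fintype.card G.V * G.subCount S m A =
      ∑ σ : G.V → ℤˣ, ((∏ v, if v ∈ A then (σ v : ℤ) else 1) *
        ∏ e, if e ∈ S then (1 + (G.edgeSpin σ e : ℤ)) ^ m e else 1) := by
  have hfactor : ∀ (σ : G.V → ℤˣ) (e : Sym2 G.V),
      (if e ∈ S then (1 + (G.edgeSpin σ e : ℤ)) ^ m e else 1) =
      ∑ k ∈ Finset.range (m e + 1),
        (if k ≠ 0 → e ∈ S then ((m e).choose k : ℤ) else 0) * (G.edgeSpin σ e : ℤ) ^ k := by
    intro σ e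
    split_ifs with he
    · rw [add_comm, add_pow]
      exact Finset.sum_congr rfl fun k _ => by simp [he, mul_comm]
    · rw [Finset.sum_eq_single 0]
      · simp
      · intro k _ hk
        simp [he, hk]
      · simp
  simp only [hfactor, Finset.prod_univ_sum, Finset.mul_sum, Finset.prod_mul_distrib]
  rw [Finset.sum_comm, subCount, Finset.mul_sum]
  refine Finset.sum_congr rfl fun n _ => ?_
  have hsupp : (∏ e, if n e ≠ 0 → e ∈ S then ((m e).choose (n e) : ℤ) else 0) =
      if G.supportedOn S n then ∏ e, ((m e).choose (n e) : ℤ) else 0 := by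
    rw [Finset.prod_ite_zero]
    by_cases h : G.supportedOn S n
    · rw [if_pos h, if_pos fun e _ => h e]
    · rw [if_neg h, if_neg fun h' => h fun e => h' e (Finset.mem_univ e)]
  have hs := G.sum_spin_eq A n
  rw [hsupp]
  simp only [mul_left_comm _ (ite (G.supportedOn S n) _ _) _]
  rw [← Finset.mul_sum, hs]
  by_cases h1 : G.sources n = A <;> by_cases h2 : G.supportedOn S n <;> simp [h1, h2, mul_comm]

/-- If `x` and `y` are joined by an `m`-open path in `S`, then as many sub-multigraphs of `m`
inside `S` have sources `{x, y}` as have no source. -/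
theorem subCount_pair_eq {S : Set (Sym2 G.V)} (hS : ∀ v, s(v, v) ∉ S) {m : Sym2 G.V → ℕ}
    {x y : G.V} (hxy : x ≠ y)
    (hc : Relation.ReflTransGen (fun a b => s(a, b) ∈ S ∧ 1 ≤ m s(a, b)) x y) :
    G.subCount S m {x, y} = G.subCount S m ∅ := by
  classical
  refine mul_left_cancel₀ (pow_ne_zero (Fintype.card G.V) (two_ne_zero (α := ℤ))) ?_
  rw [two_pow_mul_subCount, two_pow_mul_subCount]
  refine Finset.sum_congr rfl fun σ _ => ?_
  by_cases h0 : (∏ e, if e ∈ S then (1 + (G.edgeSpin σ e : ℤ)) ^ m e else 1) = 0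
  · rw [h0, mul_zero, mul_zero]
  congr 1
  rw [← ne_eq, Finset.prod_ne_zero_iff] at h0
  have hstep : ∀ a b, s(a, b) ∈ S ∧ 1 ≤ m s(a, b) → σ a = σ b := by
    rintro a b ⟨hab, hm⟩
    have hne : a ≠ b := fun h => hS a (h ▸ hab)
    have := h0 s(a, b) (Finset.mem_univ _)
    rw [if_pos hab, edgeSpin_mk _ _ hne] at this
    rcases Int.units_eq_one_or (σ a) with h1 | h1 <;>
      rcases Int.units_eq_one_or (σ b) with h2 | h2 <;>
      simp [h1, h2, Nat.one_le_iff_ne_zero.1 hm] at this ⊢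
  have hσ : σ x = σ y := by
    clear hxy
    induction hc with
    | refl => rfl
    | tail _ hbc ih => exact ih.trans (hstep _ _ hbc)
  trans ∏ v, (if v = x then (σ v : ℤ) else 1) * (if v = y then (σ v : ℤ) else 1)
  · refine Finset.prod_congr rfl fun v _ => ?_
    by_cases ha : v = x <;> by_cases hb : v = y <;> simp_all
  · rw [Finset.prod_mul_distrib]
    simp [hσ, ← Units.val_mul]

theorem subCount_pair_eq_zero {S : Set (Sym2 G.V)} (hS : ∀ v, s(v, v) ∉ S)
    {m : Sym2 G.V → ℕ} {x y : G.V} (hxy : x ≠ y)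
    (hc : ¬ Relation.ReflTransGen (fun a b => s(a, b) ∈ S ∧ 1 ≤ m s(a, b)) x y) :
    G.subCount S m {x, y} = 0 := by
  classical
  refine Finset.sum_eq_zero fun n hn => if_neg ?_
  rintro ⟨hsrc, hsupp⟩
  refine hc (Relation.ReflTransGen.mono (fun a b hab => ?_) _ _
    (G.reflTransGen_of_sources (fun v => ?_) hxy hsrc))
  · have := Finset.mem_range.1 (Fintype.mem_piFinset.1 hn s(a, b))
    exact ⟨hsupp _ (Nat.one_le_iff_ne_zero.1 hab), by omega⟩
  · by_contra h
    exact hS v (hsupp _ h)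

theorem curWeight_mul_curWeight (β : ℝ) {n m : Sym2 G.V → ℕ} (h : ∀ e, n e ≤ m e) :
    G.curWeight β n * G.curWeight β (m - n) =
      G.curWeight β m * ∏ e, ((m e).choose (n e) : ℝ) := by
  classical
  simp only [curWeight_eq, ← Finset.prod_mul_distrib]
  refine Finset.prod_congr rfl fun e _ => ?_
  rw [Pi.sub_apply, Nat.cast_choose ℝ (h e), div_mul_div_comm, ← pow_add,
    Nat.add_sub_cancel' (h e)]
  field_simp

open Classical in
/-- Summation over pairs of currents, organised by their sum. -/
theorem tsum_pair_eq {F : (Sym2 G.V → ℕ) × (Sym2 G.V → ℕ) → ℝ} (hF : Summable F) :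
    ∑' nn, F nn = ∑' m : Sym2 G.V → ℕ,
      ∑ n ∈ Fintype.piFinset fun e => Finset.range (m e + 1), F (n, m - n) := by
  let P : (Sym2 G.V → ℕ) → Finset (Sym2 G.V → ℕ) :=
    fun m => Fintype.piFinset fun e => Finset.range (m e + 1)
  have hP : ∀ m n, n ∈ P m ↔ n ≤ m := fun m n => by
    simp [P, Pi.le_def]
  let E : (Σ m, P m) ≃ (Sym2 G.V → ℕ) × (Sym2 G.V → ℕ) :=
    { toFun := fun p => (p.2.1, p.1 - p.2.1)
      invFun := fun nn => ⟨nn.1 + nn.2, nn.1, (hP _ _).2 le_self_add⟩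
      left_inv := by
        rintro ⟨m, n, hn⟩
        have : n + (m - n) = m := add_tsub_cancel_of_le ((hP _ _).1 hn)
        ext1
        · exact this
        · congr!
      right_inv := fun nn => by simp }
  rw [← E.tsum_eq F, Summable.tsum_sigma (f := fun p => F (E p)) (E.summable_iff.2 hF)]
  refine tsum_congr fun m => ?_
  exact Finset.tsum_subtype (P m) fun n => F (n, m - n)

open Classical in
/-- The switching lemma for currents on a subgraph and on the whole graph. -/
theorem switching {S : Set (Sym2 G.V)} (hS : ∀ v, s(v, v) ∉ S) {β : ℝ} (hβ : 0 ≤ β)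
    {x y : G.V} (hxy : x ≠ y) :
    (∑' nn : (Sym2 G.V → ℕ) × (Sym2 G.V → ℕ),
      if G.sources nn.1 = {x, y} ∧ G.supportedOn S nn.1 ∧ G.sources nn.2 = ∅
        then G.curWeight β nn.1 * G.curWeight β nn.2 else 0) =
    ∑' nn : (Sym2 G.V → ℕ) × (Sym2 G.V → ℕ),
      if G.sources nn.1 = ∅ ∧ G.supportedOn S nn.1 ∧ G.sources nn.2 = {x, y} ∧
          Relation.ReflTransGen (fun a b => s(a, b) ∈ S ∧ 1 ≤ (nn.1 + nn.2) s(a, b)) x y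
        then G.curWeight β nn.1 * G.curWeight β nn.2 else 0 := by
  rw [G.tsum_pair_eq (G.summable_curWeight_mul_ite hβ _),
    G.tsum_pair_eq (G.summable_curWeight_mul_ite hβ _)]
  refine tsum_congr fun m => ?_
  have hfiber : ∀ (A B : Set G.V) (p : (Sym2 G.V → ℕ) → Prop) [DecidablePred p] (q : Prop),
      (∀ n ≤ m, p n ↔ (q ∧ G.sources m = B ∧ G.sources n = A ∧ G.supportedOn S n)) →
      (∑ n ∈ Fintype.piFinset fun e => Finset.range (m e + 1),
        if p n then G.curWeight β n * G.curWeight β (m - n) else 0) =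
      if q ∧ G.sources m = B then G.curWeight β m * (G.subCount S m A : ℝ) else 0 := by
    intro A B p _ q hp
    rw [subCount, Int.cast_sum, Finset.mul_sum]
    split_ifs with hq
    · refine Finset.sum_congr rfl fun n hn => ?_
      have hle : n ≤ m := fun e =>
        Nat.le_of_lt_succ (Finset.mem_range.1 (Fintype.mem_piFinset.1 hn e))
      have hpn : p n ↔ G.sources n = A ∧ G.supportedOn S n :=
        (hp n hle).trans ⟨fun h => h.2.2, fun h => ⟨hq.1, hq.2, h⟩⟩
      by_cases h : G.sources n = A ∧ G.supportedOn S n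
      · rw [if_pos h, if_pos (hpn.2 h), G.curWeight_mul_curWeight β hle]
        push_cast
        rfl
      · rw [if_neg h, if_neg (mt hpn.1 h), Int.cast_zero, mul_zero]
    · refine Finset.sum_eq_zero fun n hn => if_neg fun h => hq ?_
      have hle : n ≤ m := fun e =>
        Nat.le_of_lt_succ (Finset.mem_range.1 (Fintype.mem_piFinset.1 hn e))
      exact ⟨((hp n hle).1 h).1, ((hp n hle).1 h).2.1⟩
  rw [hfiber {x, y} {x, y} _ True, hfiber ∅ {x, y} _
    (Relation.ReflTransGen (fun a b => s(a, b) ∈ S ∧ 1 ≤ m s(a, b)) x y)]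
  · by_cases hc : Relation.ReflTransGen (fun a b => s(a, b) ∈ S ∧ 1 ≤ m s(a, b)) x y
    · simp [hc, G.subCount_pair_eq hS hxy hc]
    · simp [hc, G.subCount_pair_eq_zero hS hxy hc]
  · intro n hn
    have hm : n + (m - n) = m := add_tsub_cancel_of_le hn
    have hsrc := G.sources_add n (m - n)
    simp only [hm] at hsrc ⊢
    constructor
    · rintro ⟨h1, h2, h3, h4⟩
      refine ⟨h4, ?_, h1, h2⟩
      rw [hsrc, h1, h3]
      simp
    · rintro ⟨h4, h3, h1, h2⟩
      refine ⟨h1, h2, ?_, h4⟩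
      rw [← h3, hsrc, h1]
      exact (bot_symmDiff _).symm
  · intro n hn
    have hm : n + (m - n) = m := add_tsub_cancel_of_le hn
    have hsrc := G.sources_add n (m - n)
    simp only [hm, true_and] at hsrc ⊢
    constructor
    · rintro ⟨h1, h2, h3⟩
      refine ⟨?_, h1, h2⟩
      rw [hsrc, h1, h3]
      simp
    · rintro ⟨h3, h1, h2⟩
      refine ⟨h1, h2, ?_⟩
      rw [h3, h1] at hsrc
      simpa using (symmDiff_eq_left.1 hsrc.symm)

theorem conn_iff_of_apply_eq_zero {S : Set (Sym2 G.V)} {e : Sym2 G.V} {m n : Sym2 G.V → ℕ}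
    (he : n e = 0) (hmn : ∀ f ≠ e, m f = n f) {x y : G.V} :
    G.conn S e m x y ↔
      Relation.ReflTransGen (fun a b => s(a, b) ∈ S ∧ 1 ≤ n s(a, b)) x y := by
  have : (fun a b => s(a, b) ≠ e ∧ s(a, b) ∈ S ∧ 1 ≤ m s(a, b)) =
      fun a b => s(a, b) ∈ S ∧ 1 ≤ n s(a, b) := by
    funext a b
    by_cases h : s(a, b) = e
    · simp [h, he]
    · simp [h, hmn _ h]
  rw [conn, this]

open Classical in
theorem statement17 (G : FinWeightedGraph) (S : Set (Sym2 G.V))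
    (hS : ∀ e ∈ S, 0 < G.J2 e) (e : Sym2 G.V) (he : e ∈ S)
    (x y : G.V) (hxy : e = s(x, y)) (β : ℝ) (hβ : 0 ≤ β) :
    β * G.J2 e * (G.twoPoint Set.univ β x y - G.twoPoint S β x y) =
      (∑' nn : (Sym2 G.V → ℕ) × (Sym2 G.V → ℕ),
        if G.sources nn.1 = ∅ ∧ G.supportedOn S nn.1 ∧ G.sources nn.2 = ∅ ∧
            nn.1 e = 0 ∧ nn.2 e = 1 ∧
            G.conn Set.univ e (fun e' => nn.1 e' + nn.2 e') x y ∧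
            ¬ G.conn S e (fun e' => nn.1 e' + nn.2 e') x y
          then G.curWeight β nn.1 * G.curWeight β nn.2 else 0) /
        (G.curZ S β * G.curZ Set.univ β) := by
  have hdiag : ∀ v, s(v, v) ∉ S := fun v hv => (hS _ hv).ne' (G.J2_diag v)
  have hne : x ≠ y := fun h => hdiag x (by rwa [hxy, ← h] at he)
  have hZS := (G.curZ_pos S hβ).ne'
  have hZ := (G.curZ_pos Set.univ hβ).ne'
  rw [eq_div_iff (mul_ne_zero hZS hZ), G.twoPoint_eq, G.twoPoint_eq]
  have hpair : ∀ A B : Set G.V,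
      (∑' n, if G.sources n = A ∧ G.supportedOn S n then G.curWeight β n else 0) *
        (∑' n, if G.sources n = B ∧ G.supportedOn Set.univ n then G.curWeight β n else 0) =
      ∑' nn : (Sym2 G.V → ℕ) × (Sym2 G.V → ℕ),
        if G.sources nn.1 = A ∧ G.supportedOn S nn.1 ∧ G.sources nn.2 = B
          then G.curWeight β nn.1 * G.curWeight β nn.2 else 0 := by
    intro A B
    rw [tsum_mul_tsum_of_summable_norm (G.summable_curWeight_ite hβ _).norm
      (G.summable_curWeight_ite hβ _).norm]
    refine tsum_congr fun nn => ?_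
    have huniv : G.supportedOn Set.univ nn.2 := fun _ _ => trivial
    by_cases h1 : G.sources nn.1 = A <;> by_cases h2 : G.supportedOn S nn.1 <;>
      by_cases h3 : G.sources nn.2 = B <;> simp [h1, h2, h3, huniv]
  have hdiff : ∀ a b z w : ℝ, z ≠ 0 → w ≠ 0 → ∀ c : ℝ,
      c * (a / w - b / z) * (z * w) = c * (z * a - b * w) := by
    intro a b z w hz hw c
    field_simp
  rw [hdiff _ _ _ _ hZS hZ, G.curZ_eq, G.curZ_eq, hpair, hpair, G.switching hdiag hβ hne,
    ← (G.summable_curWeight_mul_ite hβ _).tsum_sub (G.summable_curWeight_mul_ite hβ _),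
    ← tsum_mul_left]
  have hinj : Function.Injective fun nn : (Sym2 G.V → ℕ) × (Sym2 G.V → ℕ) =>
      (nn.1, nn.2 + Pi.single e 1) := by
    rintro ⟨a, b⟩ ⟨c, d⟩ h
    simpa using h
  symm
  rw [← hinj.tsum_eq]
  · refine tsum_congr fun nn => Eq.symm ?_
    obtain ⟨n₁, n₂⟩ := nn
    have hsrc : G.sources (n₂ + Pi.single e 1) = ∅ ↔ G.sources n₂ = {x, y} := by
      rw [sources_add, hxy, sources_single]
      exact symmDiff_eq_bot
    have hval : (n₂ + Pi.single e 1 : Sym2 G.V → ℕ) e = 1 ↔ n₂ e = 0 := by simp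
    simp only [hsrc, hval]
    by_cases h1 : G.sources n₁ = ∅ ∧ G.supportedOn S n₁ ∧ G.sources n₂ = {x, y}
    swap
    · rw [if_neg h1, if_neg (by tauto), if_neg (by tauto)]
      simp
    obtain ⟨h1, h2, h3⟩ := h1
    by_cases h0 : n₁ e = 0 ∧ n₂ e = 0
    · obtain ⟨h4, h5⟩ := h0
      have hconn : ∀ T : Set (Sym2 G.V),
          G.conn T e (fun f => n₁ f + (n₂ + Pi.single e 1 : Sym2 G.V → ℕ) f) x y ↔
          Relation.ReflTransGen (fun a b => s(a, b) ∈ T ∧ 1 ≤ (n₁ + n₂) s(a, b)) x y :=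
        fun T => G.conn_iff_of_apply_eq_zero (by simp [h4, h5]) fun f hf => by simp [hf]
      simp only [hconn, G.curWeight_add_single β h5]
      by_cases hw : G.curWeight β n₂ = 0
      · simp [hw]
      have huniv : Relation.ReflTransGen
          (fun a b => s(a, b) ∈ Set.univ ∧ 1 ≤ (n₁ + n₂) s(a, b)) x y :=
        Relation.ReflTransGen.mono (fun a b hab => ⟨trivial, le_add_left hab⟩) _ _
          (G.reflTransGen_of_sources (G.apply_diag_of_curWeight_ne_zero hw) hne h3)
      by_cases hc : Relation.ReflTransGen
          (fun a b => s(a, b) ∈ S ∧ 1 ≤ (n₁ + n₂) s(a, b)) x y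
      · rw [if_pos ⟨h1, h2, h3⟩, if_pos ⟨h1, h2, h3, hc⟩, if_neg (by tauto)]
        simp
      · simp only [h1, h2, h3, h4, h5, hc, huniv]
        simp
        ring
    · have hc : Relation.ReflTransGen
          (fun a b => s(a, b) ∈ S ∧ 1 ≤ (n₁ + n₂) s(a, b)) x y :=
        Relation.ReflTransGen.single ⟨hxy ▸ he, by
          rw [← hxy, Pi.add_apply]
          omega⟩
      rw [if_pos ⟨h1, h2, h3⟩, if_pos ⟨h1, h2, h3, hc⟩, if_neg (by tauto)]
      simp
  · rintro ⟨n₁, n₂⟩ hn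
    obtain ⟨-, -, -, -, h2, -⟩ := (ite_ne_right_iff.1 hn).1
    refine ⟨(n₁, n₂ - Pi.single e 1), ?_⟩
    have : Pi.single e 1 ≤ n₂ := fun f => by
      by_cases hf : f = e
      · subst hf
        simpa using h2.ge
      · simp [hf]
    simp [tsub_add_cancel_of_le this]

end FinWeightedGraph

end IsingPaper
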